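/- The PF-D4 coefficient function f1 satisfies lim_{v→0⁺} f1(v) = 90987349/53222400 and lim_{v→0⁺} (f1(v) − 90987349/53222400)/v² = −16301796103/58118860800; in particular f1 tends to the corresponding coefficient of the classical Quinlan–Tremaine method as v → 0, and its v²-Taylor coefficient is five times that of the PF-D0 coefficient b1. -/

import Mathlib

open Filter

/-- The variable coefficient `f₁(v)` of the method PF-D4 (phase lag and its first,
second, third and fourth derivatives vanish at frequency `v`). -/
noncomputable def pfd4f1 (v : ℝ) : ℝ :=
  (216 * v ^ 6 / (Real.sin (v / 2)) ^ 10
      - 810 * v ^ 2 / (Real.sin (v / 2)) ^ 6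
      - 54 * (157 * v ^ 2 + 80) / (Real.sin (v / 2)) ^ 4
      + 36 * (1840 - 2257 * v ^ 2) / (Real.sin (v / 2)) ^ 2
      - 12288 * (20 * v ^ 4 - 71 * v ^ 2 + 20) * Real.cos v
      - 3 * v * (Real.cos (v / 2) / Real.sin (v / 2))
          * ((4682 * v ^ 2
              + 9 / (Real.sin (v / 2)) ^ 2
                  * (5 * v ^ 2 / (Real.sin (v / 2)) ^ 2 + 54 * v ^ 2 + 96)
              + 5856) / (Real.sin (v / 2)) ^ 2
            + 2520 * (31 * v ^ 2 - 48))
      - 45 * v ^ 2 / (Real.cos (v / 2)) ^ 6 * (v * Real.tan (v / 2) - 6)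
      + 56 * v * (1024 * (11 * v ^ 2 - 12) * Real.sin v
          + 135 * (48 - 31 * v ^ 2) * Real.tan (v / 2))
      - 18 / (Real.cos (v / 2)) ^ 4
          * ((-373) * v ^ 2 + 3 * (21 * v ^ 2 + 16) * v * Real.tan (v / 2) - 80)
      - 2 / (Real.cos (v / 2)) ^ 2
          * ((-39246) * v ^ 2 + (6733 * v ^ 2 + 6384) * v * Real.tan (v / 2) + 28320))
    / (24576 * v ^ 6)

open Asymptotics Topology in
/-- `EvenExpansion f a` says that `f v = a 0 + a 1 * v ^ 2 + ⋯ + a 6 * v ^ 12 + O(v ^ 14)`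
as `v → 0⁺`. -/
def EvenExpansion (f : ℝ → ℝ) (a : Fin 7 → ℝ) : Prop :=
  (fun v => f v - ∑ i, a i * v ^ (2 * (i : ℕ))) =O[𝓝[>] 0] fun v => v ^ 14

namespace EvenExpansion

open Asymptotics Topology

/-- The Cauchy product of two coefficient vectors, truncated to seven terms. -/
def cauchyProd (a b : Fin 7 → ℝ) : Fin 7 → ℝ :=
  ![a 0 * b 0,
    a 0 * b 1 + a 1 * b 0,
    a 0 * b 2 + a 1 * b 1 + a 2 * b 0,
    a 0 * b 3 + a 1 * b 2 + a 2 * b 1 + a 3 * b 0,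
    a 0 * b 4 + a 1 * b 3 + a 2 * b 2 + a 3 * b 1 + a 4 * b 0,
    a 0 * b 5 + a 1 * b 4 + a 2 * b 3 + a 3 * b 2 + a 4 * b 1 + a 5 * b 0,
    a 0 * b 6 + a 1 * b 5 + a 2 * b 4 + a 3 * b 3 + a 4 * b 2 + a 5 * b 1 + a 6 * b 0]

variable {f g : ℝ → ℝ} {a b : Fin 7 → ℝ}

theorem polynomial (a : Fin 7 → ℝ) :
    EvenExpansion (fun v => ∑ i, a i * v ^ (2 * (i : ℕ))) a := by
  simpa [EvenExpansion] using isBigO_zero _ _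

theorem congr_coeff (hf : EvenExpansion f a) (h : a = b) : EvenExpansion f b := h ▸ hf

theorem congr_fun (hf : EvenExpansion f a) (h : ∀ᶠ v in 𝓝[>] 0, f v = g v) :
    EvenExpansion g a :=
  IsBigO.congr' hf (h.mono fun v hv => by simp only [hv]) EventuallyEq.rfl

theorem add (hf : EvenExpansion f a) (hg : EvenExpansion g b) :
    EvenExpansion (fun v => f v + g v) (a + b) := by
  refine (IsBigO.add hf hg).congr_left fun v => ?_
  simp only [Pi.add_apply, add_mul, Finset.sum_add_distrib]
  ring

theorem const_mul (k : ℝ) (hf : EvenExpansion f a) :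
    EvenExpansion (fun v => k * f v) (k • a) := by
  refine (IsBigO.const_mul_left hf k).congr_left fun v => ?_
  simp only [Pi.smul_apply, smul_eq_mul, mul_assoc, mul_sub, Finset.mul_sum]

theorem tendsto_polynomial (a : Fin 7 → ℝ) :
    Tendsto (fun v : ℝ => ∑ i, a i * v ^ (2 * (i : ℕ))) (𝓝[>] 0) (𝓝 (a 0)) := by
  have h : Continuous fun v : ℝ => ∑ i, a i * v ^ (2 * (i : ℕ)) := by fun_prop
  refine (h.tendsto' 0 _ ?_).mono_left nhdsWithin_le_nhds
  simp [Fin.sum_univ_succ]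

theorem tendsto (hf : EvenExpansion f a) : Tendsto f (𝓝[>] 0) (𝓝 (a 0)) := by
  have h : Tendsto (fun v : ℝ => v ^ 14) (𝓝[>] 0) (𝓝 0) :=
    ((continuous_pow 14).tendsto' 0 0 (by norm_num)).mono_left nhdsWithin_le_nhds
  simpa using (hf.trans_tendsto h).add (tendsto_polynomial a)

theorem mul (hf : EvenExpansion f a) (hg : EvenExpansion g b) :
    EvenExpansion (fun v => f v * g v) (cauchyProd a b) := by
  have hfg := IsBigO.mul hf (hg.tendsto.isBigO_one ℝ)
  have hPg := ((tendsto_polynomial a).isBigO_one ℝ).mul hg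
  let tail : ℝ → ℝ := fun v =>
    (a 1 * b 6 + a 2 * b 5 + a 3 * b 4 + a 4 * b 3 + a 5 * b 2 + a 6 * b 1)
      + (a 2 * b 6 + a 3 * b 5 + a 4 * b 4 + a 5 * b 3 + a 6 * b 2) * v ^ 2
      + (a 3 * b 6 + a 4 * b 5 + a 5 * b 4 + a 6 * b 3) * v ^ 4
      + (a 4 * b 6 + a 5 * b 5 + a 6 * b 4) * v ^ 6
      + (a 5 * b 6 + a 6 * b 5) * v ^ 8 + a 6 * b 6 * v ^ 10
  have htail : Tendsto tail (𝓝[>] 0) (𝓝 (tail 0)) :=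
    (Continuous.tendsto (by fun_prop) 0).mono_left nhdsWithin_le_nhds
  have hrest := (htail.isBigO_one ℝ).mul (isBigO_refl (fun v : ℝ => v ^ 14) (𝓝[>] 0))
  simp only [one_mul, mul_one] at hfg hPg hrest
  refine ((hfg.add hPg).add hrest).congr_left fun v => ?_
  simp only [tail, cauchyProd, Fin.sum_univ_seven, Matrix.cons_val]
  simp
  ring

theorem inv (hf : EvenExpansion f a) (ha : a 0 ≠ 0)
    (hab : cauchyProd a b = ![1, 0, 0, 0, 0, 0, 0]) : EvenExpansion (fun v => (f v)⁻¹) b := by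
  have hprod := (hf.mul (polynomial b)).congr_coeff hab
  have hinv := (hf.tendsto.inv₀ ha).isBigO_one ℝ
  have h := (hinv.mul hprod).neg_left
  simp only [one_mul] at h
  refine IsBigO.congr' h ?_ EventuallyEq.rfl
  filter_upwards [hf.tendsto.eventually_ne ha] with v hv
  simp [Fin.sum_univ_succ]
  field_simp
  ring

end EvenExpansion

open Asymptotics Topology

theorem exp_mul_I_sub_sum_isBigO (n : ℕ) (hn : 0 < n) :
    (fun v : ℝ => Complex.exp (v / 2 * Complex.I)
      - ∑ m ∈ Finset.range n, (v / 2 * Complex.I) ^ m / m.factorial) =O[𝓝[>] 0]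
      fun v : ℝ => v ^ n := by
  have hsmall : ∀ᶠ v : ℝ in 𝓝[>] 0, v ∈ Set.Ioo (0 : ℝ) 1 := Ioo_mem_nhdsGT one_pos
  refine IsBigO.of_bound ((n.succ : ℝ) * ((n.factorial : ℝ) * n)⁻¹) ?_
  filter_upwards [hsmall] with v hv
  have hnorm : ‖(v / 2 * Complex.I : ℂ)‖ = v / 2 := by
    simp [abs_of_pos hv.1]
  have h := Complex.exp_bound (x := v / 2 * Complex.I) (by rw [hnorm]; linarith [hv.2]) hn
  rw [hnorm] at h
  have hpow : (v / 2) ^ n ≤ ‖v ^ n‖ := by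
    rw [Real.norm_of_nonneg (pow_nonneg hv.1.le n)]
    exact pow_le_pow_left₀ (by linarith [hv.1]) (by linarith [hv.1]) n
  calc _ ≤ _ := h
    _ ≤ ‖v ^ n‖ * _ := mul_le_mul_of_nonneg_right hpow (by positivity)
    _ = _ := mul_comm _ _

theorem evenExpansion_cos_half : EvenExpansion (fun v => Real.cos (v / 2))
    ![1, -1/8, 1/384, -1/46080, 1/10321920, -1/3715891200, 1/1961990553600] := by
  have h := exp_mul_I_sub_sum_isBigO 14 (by norm_num)
  refine ((Complex.reCLM.isBigO_comp _ _).trans h).congr_left fun v => ?_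
  have hexp : (Complex.exp (v / 2 * Complex.I)).re = Real.cos (v / 2) := by
    exact_mod_cast Complex.exp_ofReal_mul_I_re (v / 2)
  have hcast : (v / 2 : ℂ) = ((v / 2 : ℝ) : ℂ) := by push_cast; rfl
  rw [Complex.reCLM_apply, Complex.sub_re, hexp, hcast]
  simp [Finset.sum_range_succ, mul_pow, Fin.sum_univ_succ, Complex.I_pow_eq_pow_mod,
    Nat.factorial, pow_succ]
  ring

theorem evenExpansion_sinc_half : EvenExpansion (fun v => Real.sin (v / 2) / (v / 2))
    ![1, -1/24, 1/1920, -1/322560, 1/92897280, -1/40874803200, 1/25505877196800] := by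
  have h := exp_mul_I_sub_sum_isBigO 15 (by norm_num)
  have him := ((Complex.imCLM.isBigO_comp _ _).trans h).mul
    (isBigO_refl (fun v : ℝ => 2 / v) (𝓝[>] 0))
  have hpow : (fun v : ℝ => v ^ 15 * (2 / v)) =O[𝓝[>] 0] fun v => v ^ 14 := by
    refine ((isBigO_refl (fun v : ℝ => v ^ 14) _).const_mul_left 2).congr' ?_ EventuallyEq.rfl
    filter_upwards [self_mem_nhdsWithin] with v (hv : 0 < v)
    field_simp
  refine (him.trans hpow).congr' ?_ EventuallyEq.rfl
  filter_upwards [self_mem_nhdsWithin] with v (hv : 0 < v)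
  have hexp : (Complex.exp (v / 2 * Complex.I)).im = Real.sin (v / 2) := by
    exact_mod_cast Complex.exp_ofReal_mul_I_im (v / 2)
  have hcast : (v / 2 : ℂ) = ((v / 2 : ℝ) : ℂ) := by push_cast; rfl
  rw [Complex.imCLM_apply, Complex.sub_im, hexp, hcast]
  simp [Finset.sum_range_succ, mul_pow, Fin.sum_univ_succ, Complex.I_pow_eq_pow_mod,
    Nat.factorial, pow_succ]
  field_simp
  ring

open EvenExpansion

/-- The numerator of `pfd4f1`, multiplied by `v ^ 4`, in terms of `w = v ^ 2`,
`U = sin (v / 2) / (v / 2)` and `C = cos (v / 2)`. -/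
noncomputable def pfd4f1ScaledNumerator (w U C : ℝ) : ℝ :=
  221184 / U ^ 10 - 51840 / U ^ 6 - 864 * (80 + 157 * w) / U ^ 4
    + 144 * w * (1840 - 2257 * w) / U ^ 2
    - 12288 * w ^ 2 * (20 - 71 * w + 20 * w ^ 2) * (2 * C ^ 2 - 1)
    - C / U * (24 * w * (5856 + 4682 * w) / U ^ 2 + 864 * (96 + 54 * w) / U ^ 4
        + 17280 / U ^ 6 + 15120 * w ^ 2 * (31 * w - 48))
    + 57344 * w ^ 3 * (11 * w - 12) * (U * C) + 3780 * w ^ 3 * (48 - 31 * w) * (U / C)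
    + 270 * w ^ 3 / C ^ 6 - 45 / 2 * w ^ 4 / C ^ 6 * (U / C)
    + 18 * w ^ 2 * (80 + 373 * w) / C ^ 4 - 27 * w ^ 3 * (16 + 21 * w) / C ^ 4 * (U / C)
    - 2 * w ^ 2 * (28320 - 39246 * w) / C ^ 2
    - w ^ 3 * (6384 + 6733 * w) / C ^ 2 * (U / C)

theorem pfd4f1_eq_scaledNumerator_div {v : ℝ} (hv : v ≠ 0) (hs : Real.sin (v / 2) ≠ 0)
    (hc : Real.cos (v / 2) ≠ 0) :
    pfd4f1 v = pfd4f1ScaledNumerator (v ^ 2) (Real.sin (v / 2) / (v / 2)) (Real.cos (v / 2))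
      / (24576 * v ^ 10) := by
  have hsin : Real.sin v = 2 * Real.sin (v / 2) * Real.cos (v / 2) := by
    rw [← Real.sin_two_mul]; ring_nf
  have hcos : Real.cos v = 2 * Real.cos (v / 2) ^ 2 - 1 := by
    rw [← Real.cos_two_mul]; ring_nf
  rw [pfd4f1, pfd4f1ScaledNumerator, hsin, hcos, Real.tan_eq_sin_div_cos]
  generalize Real.sin (v / 2) = s at *
  generalize Real.cos (v / 2) = c at *
  field_simp
  ring

theorem evenExpansion_pfd4f1ScaledNumerator :
    EvenExpansion
      (fun v => pfd4f1ScaledNumerator (v ^ 2) (Real.sin (v / 2) / (v / 2)) (Real.cos (v / 2)))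
      ![0, 0, 0, 0, 0, 24576 * (90987349 / 53222400), 24576 * (-16301796103 / 58118860800)] := by
  have hu := evenExpansion_sinc_half
  have hc := evenExpansion_cos_half
  have hiu := hu.inv
    (b := ![1, 1/24, 7/5760, 31/967680, 127/154828800, 73/3503554560, 1414477/2678117105664000])
    (by norm_num) (by simp only [cauchyProd, Matrix.cons_val]; norm_num)
  have hic := hc.inv
    (b := ![1, 1/8, 5/384, 61/46080, 277/2064384, 50521/3715891200, 540553/392398110720])
    (by norm_num) (by simp only [cauchyProd, Matrix.cons_val]; norm_num)
  have hp := (hiu.mul hiu).congr_coeff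
    (b := ![1, 1/12, 1/240, 1/6048, 1/172800, 1/5322240, 691/118879488000])
    (by simp only [cauchyProd, Matrix.cons_val]; norm_num)
  have hp2 := (hp.mul hp).congr_coeff
    (b := ![1, 1/6, 11/720, 31/30240, 41/725760, 31/11404800, 10331/87178291200])
    (by simp only [cauchyProd, Matrix.cons_val]; norm_num)
  have hp3 := (hp2.mul hp).congr_coeff
    (b := ![1, 1/4, 1/30, 191/60480, 289/1209600, 491/31933440, 27257/31135104000])
    (by simp only [cauchyProd, Matrix.cons_val]; norm_num)
  have hp5 := (hp3.mul hp2).congr_coeff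
    (b := ![1, 5/12, 13/144, 41/3024, 1/630, 14797/95800320, 6803477/523069747200])
    (by simp only [cauchyProd, Matrix.cons_val]; norm_num)
  have hq := (hic.mul hic).congr_coeff
    (b := ![1, 1/4, 1/24, 17/2880, 31/40320, 691/7257600, 5461/479001600])
    (by simp only [cauchyProd, Matrix.cons_val]; norm_num)
  have hq2 := (hq.mul hq).congr_coeff
    (b := ![1, 1/2, 7/48, 47/1440, 251/40320, 553/518400, 324419/1916006400])
    (by simp only [cauchyProd, Matrix.cons_val]; norm_num)
  have hq3 := (hq2.mul hq).congr_coeff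
    (b := ![1, 3/4, 5/16, 23/240, 65/2688, 25757/4838400, 135293/127733760])
    (by simp only [cauchyProd, Matrix.cons_val]; norm_num)
  have hk := (hc.mul hiu).congr_coeff
    (b := ![1, -1/12, -1/720, -1/30240, -1/1209600, -1/47900160, -691/1307674368000])
    (by simp only [cauchyProd, Matrix.cons_val]; norm_num)
  have ht := (hu.mul hic).congr_coeff
    (b := ![1, 1/12, 1/120, 17/20160, 31/362880, 691/79833600, 5461/6227020800])
    (by simp only [cauchyProd, Matrix.cons_val]; norm_num)
  have hsv := (hu.mul hc).congr_coeff
    (b := ![1, -1/6, 1/120, -1/5040, 1/362880, -1/39916800, 1/6227020800])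
    (by simp only [cauchyProd, Matrix.cons_val]; norm_num)
  have hcv := (((hc.mul hc).const_mul 2).add (polynomial ![-1, 0, 0, 0, 0, 0, 0])).congr_coeff
    (b := ![1, -1/2, 1/24, -1/720, 1/40320, -1/3628800, 1/479001600])
    (by simp only [cauchyProd, Matrix.cons_val]; norm_num)
  have hkp := (hk.mul hp).congr_coeff
    (b := ![1, 0, -1/240, -1/3024, -1/57600, -1/1330560, -691/23775897600])
    (by simp only [cauchyProd, Matrix.cons_val]; norm_num)
  have hkp2 := (hk.mul hp2).congr_coeff
    (b := ![1, 1/12, 0, -31/60480, -41/725760, -31/7603200, -10331/43589145600])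
    (by simp only [cauchyProd, Matrix.cons_val]; norm_num)
  have hkp3 := (hk.mul hp3).congr_coeff
    (b := ![1, 1/6, 1/90, 0, -289/3628800, -491/47900160, -27257/31135104000])
    (by simp only [cauchyProd, Matrix.cons_val]; norm_num)
  have hqt := (hq.mul ht).congr_coeff
    (b := ![1, 1/3, 17/240, 31/2520, 691/362880, 5461/19958400, 929569/24908083200])
    (by simp only [cauchyProd, Matrix.cons_val]; norm_num)
  have hq2t := (hq2.mul ht).congr_coeff
    (b := ![1, 7/12, 47/240, 251/5040, 553/51840, 324419/159667200, 8849299/24908083200])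
    (by simp only [cauchyProd, Matrix.cons_val]; norm_num)
  have hq3t := (hq3.mul ht).congr_coeff
    (b := ![1, 5/6, 23/60, 65/504, 25757/725760, 135293/15966720, 1416017/778377600])
    (by simp only [cauchyProd, Matrix.cons_val]; norm_num)
  have hsum := ((polynomial ![221184, 0, 0, 0, 0, 0, 0]).mul hp5)
    |>.add ((polynomial ![-51840, 0, 0, 0, 0, 0, 0]).mul hp3)
    |>.add ((polynomial ![-864 * 80, -864 * 157, 0, 0, 0, 0, 0]).mul hp2)
    |>.add ((polynomial ![0, 144 * 1840, -144 * 2257, 0, 0, 0, 0]).mul hp)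
    |>.add ((polynomial ![0, 0, -12288 * 20, 12288 * 71, -12288 * 20, 0, 0]).mul hcv)
    |>.add ((polynomial ![0, -24 * 5856, -24 * 4682, 0, 0, 0, 0]).mul hkp)
    |>.add ((polynomial ![-864 * 96, -864 * 54, 0, 0, 0, 0, 0]).mul hkp2)
    |>.add ((polynomial ![-17280, 0, 0, 0, 0, 0, 0]).mul hkp3)
    |>.add ((polynomial ![0, 0, 15120 * 48, -15120 * 31, 0, 0, 0]).mul hk)
    |>.add ((polynomial ![0, 0, 0, -57344 * 12, 57344 * 11, 0, 0]).mul hsv)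
    |>.add ((polynomial ![0, 0, 0, 3780 * 48, -3780 * 31, 0, 0]).mul ht)
    |>.add ((polynomial ![0, 0, 0, 270, 0, 0, 0]).mul hq3)
    |>.add ((polynomial ![0, 0, 0, 0, -45 / 2, 0, 0]).mul hq3t)
    |>.add ((polynomial ![0, 0, 18 * 80, 18 * 373, 0, 0, 0]).mul hq2)
    |>.add ((polynomial ![0, 0, 0, -27 * 16, -27 * 21, 0, 0]).mul hq2t)
    |>.add ((polynomial ![0, 0, -2 * 28320, 2 * 39246, 0, 0, 0]).mul hq)
    |>.add ((polynomial ![0, 0, 0, -6384, -6733, 0, 0]).mul hqt)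
  refine (hsum.congr_coeff ?_).congr_fun (.of_forall fun v => ?_)
  · simp only [cauchyProd, Matrix.cons_val]; norm_num
  · generalize Real.sin (v / 2) / (v / 2) = U
    generalize Real.cos (v / 2) = C
    simp only [pfd4f1ScaledNumerator, Fin.sum_univ_seven, Matrix.cons_val]
    norm_num only [Fin.coe_ofNat_eq_mod]
    ring

/-- The PF-D4 coefficient `f₁` tends to the classical Quinlan–Tremaine coefficient
as `v → 0⁺`, and its `v²`-Taylor coefficient is five times that of the PF-D0
coefficient `b₁`. -/
theorem pfd4_f1_limit :
    Tendsto pfd4f1 (nhdsWithin 0 (Set.Ioi 0)) (nhds (90987349 / 53222400)) ∧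
    Tendsto (fun v : ℝ => (pfd4f1 v - 90987349 / 53222400) / v ^ 2)
      (nhdsWithin 0 (Set.Ioi 0)) (nhds (-16301796103 / 58118860800)) := by
  have hpos : ∀ᶠ v : ℝ in 𝓝[>] 0, 0 < v := self_mem_nhdsWithin
  have hsq : Tendsto (fun v : ℝ => v ^ 2) (𝓝[>] 0) (𝓝 0) :=
    ((continuous_pow 2).tendsto' 0 0 (by norm_num)).mono_left nhdsWithin_le_nhds
  have hsecond : Tendsto (fun v : ℝ => (pfd4f1 v - 90987349 / 53222400) / v ^ 2)
      (𝓝[>] 0) (𝓝 (-16301796103 / 58118860800)) := by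
    have hO := IsBigO.mul evenExpansion_pfd4f1ScaledNumerator
      (isBigO_refl (fun v : ℝ => (24576 * v ^ 12)⁻¹) (𝓝[>] 0))
    have hzero : Tendsto (fun v : ℝ => v ^ 14 * (24576 * v ^ 12)⁻¹) (𝓝[>] 0) (𝓝 0) := by
      have h := hsq.div_const 24576
      rw [zero_div] at h
      refine h.congr' ?_
      filter_upwards [hpos] with v hv
      field_simp
    have hlim := (hO.trans_tendsto hzero).add_const (-16301796103 / 58118860800)
    rw [zero_add] at hlim
    refine hlim.congr' ?_
    filter_upwards [hpos, evenExpansion_sinc_half.tendsto.eventually_ne (b₂ := 0) (by simp),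
      evenExpansion_cos_half.tendsto.eventually_ne (b₂ := 0) (by simp)] with v hv hu hc
    have hs : Real.sin (v / 2) ≠ 0 := fun h => hu (by simp [h])
    rw [pfd4f1_eq_scaledNumerator_div hv.ne' hs hc]
    simp [Fin.sum_univ_succ]
    field_simp
    ring
  refine ⟨?_, hsecond⟩
  have h := (hsq.mul hsecond).add_const (90987349 / 53222400)
  rw [zero_mul, zero_add] at h
  refine h.congr' ?_
  filter_upwards [hpos] with v hv
  field_simp
  ring
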